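/- Define finite words b_N over {a,b} by b_0 = ε and b_{N+1} = φ(b_N)·a. For every N ≥ 1: the word φ^N(a) is a return word to b_N in the Fibonacci word f occurring at occurrence 0 (i.e., it is the prefix return word), the word φ^N(b) is also a return word to b_N in f, and every return word to b_N in f equals φ^N(a) or φ^N(b). -/

import Mathlib

/-!
Occurrences of `bN (N + 1)` in the Fibonacci word `f` correspond exactly to occurrences of `bN N`.
Write `blockStart n = |φ(f₀ ⋯ f_{n-1})|` for the position at which the block `φ(f_n)` begins in the
factorisation `f = φ(f₀)φ(f₁)⋯`. Every block begins with `a` and the only other letter of a block is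
`b`, so the positions of `a` in `f` are exactly the values of `blockStart` (`exists_blockStart_eq`).
Since `f_n = a` or `f_n = b` according to whether the letter after position `blockStart n` is `b` or
`a`, `φ(w)a` occurs at `blockStart n` iff `w` occurs at `n` (`occursAt_phiW_append`); and `bN (N +
1) = φ(bN N)a` begins with `a`, so it occurs only at such positions (`occursAt_bN_succ`).

As `blockStart` is strictly increasing, it maps consecutive occurrences of `bN N` to consecutive
occurrences of `bN (N + 1)`, and the return words to `bN (N + 1)` are precisely the `φ`-images of
the return words to `bN N` (`IsReturnWordAt.map_phiW` and `IsReturnWordAt.exists_eq_phiW`). The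
result follows by induction from `bN 0 = ε`, whose return words are the single letters.
-/

open Filter

/-- The golden mean τ = (1+√5)/2. -/
noncomputable def tau : ℝ := (1 + Real.sqrt 5) / 2

/-- The Fibonacci morphism φ on the alphabet {a, b}; we encode a = `false`, b = `true`,
so φ(a) = ab and φ(b) = a. -/
def phi : Bool → List Bool
  | false => [false, true]
  | true  => [false]

/-- Application of the morphism φ to a finite word. -/
def phiW (w : List Bool) : List Bool := w.flatMap phi

/-- φⁿ(a). -/
def phiIter (n : ℕ) : List Bool := phiW^[n] [false]

/-- The Fibonacci word, i.e. the fixed point of φ beginning with a (= `false`):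
the unique sequence having φⁿ(a) as a prefix for every n. -/
def fibWord (i : ℕ) : Bool := (phiIter (i + 1)).getD i false

/-- The factor of the sequence `u` of length `n` occurring at index `i`. -/
def factorAt {α : Type*} (u : ℕ → α) (i n : ℕ) : List α :=
  (List.range n).map fun k => u (i + k)

/-- The finite word `w` occurs in the sequence `u` at index `i`. -/
def OccursAt {α : Type*} (u : ℕ → α) (w : List α) (i : ℕ) : Prop :=
  factorAt u i w.length = w

/-- `w` is a factor of the sequence `u`. -/
def IsFactor {α : Type*} (u : ℕ → α) (w : List α) : Prop :=
  ∃ i, OccursAt u w i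

/-- `v` is the return word to `w` in `u` occurring at index `i`: `i` and `j = i + |v|`
are consecutive occurrences of `w` in `u`, and `v = u_i u_{i+1} ⋯ u_{j-1}`. -/
def IsReturnWordAt {α : Type*} (u : ℕ → α) (w v : List α) (i : ℕ) : Prop :=
  ∃ j, i < j ∧ OccursAt u w i ∧ OccursAt u w j ∧
    (∀ m, i < m → m < j → ¬ OccursAt u w m) ∧ v = factorAt u i (j - i)

/-- `v` is a return word to `w` in `u`. -/
def IsReturnWord {α : Type*} (u : ℕ → α) (w v : List α) : Prop :=
  ∃ i, IsReturnWordAt u w v i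

/-- The bispecial prefixes of the Fibonacci word: b_0 = ε, b_{N+1} = φ(b_N)·a. -/
def bN : ℕ → List Bool
  | 0 => []
  | N + 1 => phiW (bN N) ++ [false]

/-! ### Factors and occurrences -/

section Factors

variable {α : Type*} (u : ℕ → α)

theorem factorAt_length (i n : ℕ) : (factorAt u i n).length = n := by
  simp [factorAt]

theorem factorAt_add (i m n : ℕ) :
    factorAt u i (m + n) = factorAt u i m ++ factorAt u (i + m) n := by
  simp [factorAt, List.range_add, Nat.add_assoc]

theorem factorAt_one (i : ℕ) : factorAt u i 1 = [u i] := by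
  simp [factorAt]

theorem occursAt_nil (i : ℕ) : OccursAt u [] i := by
  simp [OccursAt, factorAt]

theorem occursAt_append (v w : List α) (i : ℕ) :
    OccursAt u (v ++ w) i ↔ OccursAt u v i ∧ OccursAt u w (i + v.length) := by
  unfold OccursAt
  rw [List.length_append, factorAt_add]
  constructor
  · exact fun h => List.append_inj h (factorAt_length ..)
  · rintro ⟨h1, h2⟩
    rw [h1, h2]

theorem occursAt_cons (c : α) (w : List α) (i : ℕ) :
    OccursAt u (c :: w) i ↔ u i = c ∧ OccursAt u w (i + 1) := by
  have h := occursAt_append u [c] w i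
  simpa [OccursAt, factorAt_one] using h

end Factors

/-! ### The Fibonacci word is fixed by the morphism -/

theorem phiW_append (v w : List Bool) : phiW (v ++ w) = phiW v ++ phiW w :=
  List.flatMap_append

theorem phiIter_succ (n : ℕ) : phiIter (n + 1) = phiW (phiIter n) :=
  Function.iterate_succ_apply' ..

theorem phiW_prefix {v w : List Bool} (h : v <+: w) : phiW v <+: phiW w := by
  obtain ⟨t, rfl⟩ := h
  exact ⟨phiW t, (phiW_append v t).symm⟩

theorem phiIter_prefix_succ (n : ℕ) : phiIter n <+: phiIter (n + 1) := by
  induction n with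
  | zero => exact ⟨[true], rfl⟩
  | succ n ih =>
    rw [phiIter_succ n, phiIter_succ (n + 1)]
    exact phiW_prefix ih

theorem phiIter_prefix {m n : ℕ} (h : m ≤ n) : phiIter m <+: phiIter n := by
  induction n, h using Nat.le_induction with
  | base => exact List.prefix_rfl
  | succ n _ ih => exact ih.trans (phiIter_prefix_succ n)

theorem length_le_length_phiW (w : List Bool) : w.length ≤ (phiW w).length := by
  induction w with
  | nil => simp
  | cons c w ih => cases c <;> simp [phiW, phi] at ih ⊢ <;> omega

/-- Since `φⁿ(a)` begins with `a` and `|φ(a)| = 2`, each application of `φ` adds at least one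
letter. -/
theorem lt_length_phiIter (n : ℕ) : n < (phiIter n).length := by
  induction n with
  | zero => simp [phiIter]
  | succ n ih =>
    obtain ⟨t, ht⟩ := phiIter_prefix (Nat.zero_le n)
    have ht' : phiIter n = false :: t := by rw [← ht]; rfl
    have h := length_le_length_phiW t
    have h2 : (phiIter (n + 1)).length = (phiW t).length + 2 := by
      rw [phiIter_succ, ht']; simp [phiW, phi]
    rw [ht', List.length_cons] at ih
    omega

theorem fibWord_eq {i n : ℕ} (h : i < (phiIter n).length) : fibWord i = (phiIter n)[i] := by
  have hi : i < (phiIter (i + 1)).length := by have := lt_length_phiIter (i + 1); omega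
  unfold fibWord
  rw [List.getD_eq_getElem _ _ hi]
  rcases le_total (i + 1) n with hn | hn
  · exact (phiIter_prefix hn).getElem hi
  · exact ((phiIter_prefix hn).getElem h).symm

theorem factorAt_prefix_phiIter {l n : ℕ} (h : l ≤ (phiIter n).length) :
    factorAt fibWord 0 l = (phiIter n).take l := by
  refine List.ext_getElem (by simp [factorAt_length, h]) fun i h1 h2 => ?_
  rw [factorAt_length] at h1
  simp [factorAt, fibWord_eq (h1.trans_le h)]

/-- The position in the Fibonacci word `f` at which the block `φ(f_n)` begins. -/
def blockStart (n : ℕ) : ℕ := (phiW (factorAt fibWord 0 n)).length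

/-- The fixed point equation `φ(f) = f`, on prefixes. -/
theorem factorAt_blockStart_zero (n : ℕ) :
    factorAt fibWord 0 (blockStart n) = phiW (factorAt fibWord 0 n) := by
  have hp : phiW (factorAt fibWord 0 n) <+: phiIter (n + 1) := by
    rw [phiIter_succ, factorAt_prefix_phiIter (lt_length_phiIter n).le]
    exact phiW_prefix (List.take_prefix _ _)
  rw [blockStart, factorAt_prefix_phiIter hp.length_le]
  exact (List.prefix_iff_eq_take.1 hp).symm

theorem blockStart_add (n m : ℕ) :
    blockStart (n + m) = blockStart n + (phiW (factorAt fibWord n m)).length := by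
  simp [blockStart, factorAt_add, phiW_append]

theorem factorAt_blockStart (n m : ℕ) :
    factorAt fibWord (blockStart n) (phiW (factorAt fibWord n m)).length =
      phiW (factorAt fibWord n m) := by
  have h := factorAt_blockStart_zero (n + m)
  rw [blockStart_add, factorAt_add, factorAt_add, phiW_append, factorAt_blockStart_zero] at h
  simpa using h

theorem blockStart_succ (n : ℕ) :
    blockStart (n + 1) = blockStart n + (phi (fibWord n)).length := by
  rw [blockStart_add, factorAt_one]
  simp [phiW]

theorem occursAt_phi (n : ℕ) : OccursAt fibWord (phi (fibWord n)) (blockStart n) := by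
  have h := factorAt_blockStart n 1
  simpa [OccursAt, factorAt_one, phiW] using h

theorem blockStart_strictMono : StrictMono blockStart := by
  refine strictMono_nat_of_lt_succ fun n => ?_
  rw [blockStart_succ]
  cases fibWord n <;> simp [phi]

/-! ### Desubstitution -/

theorem fibWord_blockStart (n : ℕ) : fibWord (blockStart n) = false := by
  have h := occursAt_phi n
  cases hn : fibWord n <;> rw [hn, phi, occursAt_cons] at h <;> exact h.1

theorem fibWord_blockStart_add_one {n : ℕ} (hn : fibWord n = false) :
    fibWord (blockStart n + 1) = true := by
  have h := occursAt_phi n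
  rw [hn, phi, occursAt_cons, occursAt_cons] at h
  exact h.2.1

/-- Every `a` in the Fibonacci word is the beginning of a block. -/
theorem exists_blockStart_eq {i : ℕ} (hi : fibWord i = false) : ∃ n, blockStart n = i := by
  have key : ∀ i, ∃ n, i = blockStart n ∨ (i = blockStart n + 1 ∧ fibWord n = false) := by
    intro i
    induction i with
    | zero => exact ⟨0, Or.inl rfl⟩
    | succ i ih =>
      obtain ⟨n, rfl | ⟨rfl, hn⟩⟩ := ih
      · cases hn : fibWord n with
        | false => exact ⟨n, Or.inr ⟨rfl, hn⟩⟩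
        | true => exact ⟨n + 1, Or.inl (by simp [blockStart_succ, hn, phi])⟩
      · exact ⟨n + 1, Or.inl (by simp [blockStart_succ, hn, phi])⟩
  obtain ⟨n, rfl | ⟨rfl, hn⟩⟩ := key i
  · exact ⟨n, rfl⟩
  · simp [fibWord_blockStart_add_one hn] at hi

/-- The final `a` is what makes this an equivalence: the last block `φ(b) = a` of `φ(w)` could
otherwise be read as the beginning of `φ(a) = ab`. -/
theorem occursAt_phiW_append (w : List Bool) (n : ℕ) :
    OccursAt fibWord (phiW w ++ [false]) (blockStart n) ↔ OccursAt fibWord w n := by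
  induction w generalizing n with
  | nil => simp [phiW, occursAt_cons, occursAt_nil, fibWord_blockStart]
  | cons c w ih =>
    have hsplit : phiW (c :: w) ++ [false] = phi c ++ (phiW w ++ [false]) := by simp [phiW]
    rw [hsplit, occursAt_append, occursAt_cons, ← ih (n + 1), blockStart_succ]
    constructor
    · rintro ⟨h1, h2⟩
      have hc : fibWord n = c := by
        cases c <;> cases hn : fibWord n
        · rfl
        · -- `ab` would be read where `φ(b) = a` is followed by the next block
          have h3 := fibWord_blockStart (n + 1)
          rw [blockStart_succ, hn] at h3
          simp only [phi, occursAt_cons, List.length_singleton] at h1 h3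
          simp [h1.2.1] at h3
        · -- `φ(w)a` begins with `a`, whereas the block `φ(a) = ab` continues with `b`
          have h3 := fibWord_blockStart_add_one hn
          have h4 : fibWord (blockStart n + 1) = false := by
            rcases w with _ | ⟨d, w⟩
            · simpa [phiW, phi, occursAt_cons, occursAt_nil] using h2
            · cases d <;> simp only [phiW, phi, List.flatMap_cons, List.cons_append,
                occursAt_cons, List.length_singleton] at h2 <;> exact h2.1
          simp [h3] at h4
        · rfl
      exact ⟨hc, hc ▸ h2⟩
    · rintro ⟨rfl, h2⟩
      exact ⟨occursAt_phi n, h2⟩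

theorem bN_succ_eq_cons (N : ℕ) : ∃ t, bN (N + 1) = false :: t := by
  rw [bN]
  rcases bN N with _ | ⟨c, w⟩
  · exact ⟨[], rfl⟩
  · cases c <;> simp [phiW, phi]

theorem occursAt_bN_succ (N i : ℕ) :
    OccursAt fibWord (bN (N + 1)) i ↔ ∃ n, blockStart n = i ∧ OccursAt fibWord (bN N) n := by
  constructor
  · intro h
    obtain ⟨t, ht⟩ := bN_succ_eq_cons N
    have hi : fibWord i = false := by
      have h' := h
      rw [ht, occursAt_cons] at h'
      exact h'.1
    obtain ⟨n, rfl⟩ := exists_blockStart_eq hi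
    exact ⟨n, rfl, (occursAt_phiW_append _ n).1 h⟩
  · rintro ⟨n, rfl, h⟩
    exact (occursAt_phiW_append _ n).2 h

/-! ### Return words -/

theorem factorAt_blockStart_sub {n m : ℕ} (h : n ≤ m) :
    factorAt fibWord (blockStart n) (blockStart m - blockStart n) =
      phiW (factorAt fibWord n (m - n)) := by
  have h1 := blockStart_add n (m - n)
  rw [Nat.add_sub_cancel' h] at h1
  rw [h1, Nat.add_sub_cancel_left, factorAt_blockStart]

theorem IsReturnWordAt.map_phiW {N n : ℕ} {v : List Bool}
    (h : IsReturnWordAt fibWord (bN N) v n) :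
    IsReturnWordAt fibWord (bN (N + 1)) (phiW v) (blockStart n) := by
  obtain ⟨m, hnm, hn, hm, hbetween, rfl⟩ := h
  refine ⟨blockStart m, blockStart_strictMono hnm, (occursAt_bN_succ ..).2 ⟨n, rfl, hn⟩,
    (occursAt_bN_succ ..).2 ⟨m, rfl, hm⟩, fun k h1 h2 hk => ?_,
    (factorAt_blockStart_sub hnm.le).symm⟩
  obtain ⟨l, rfl, hl⟩ := (occursAt_bN_succ ..).1 hk
  exact hbetween l (blockStart_strictMono.lt_iff_lt.1 h1) (blockStart_strictMono.lt_iff_lt.1 h2) hl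

theorem IsReturnWordAt.exists_eq_phiW {N i : ℕ} {v : List Bool}
    (h : IsReturnWordAt fibWord (bN (N + 1)) v i) :
    ∃ n w, IsReturnWordAt fibWord (bN N) w n ∧ v = phiW w := by
  obtain ⟨j, hij, hi, hj, hbetween, rfl⟩ := h
  obtain ⟨n, rfl, hn⟩ := (occursAt_bN_succ ..).1 hi
  obtain ⟨m, rfl, hm⟩ := (occursAt_bN_succ ..).1 hj
  have hnm := blockStart_strictMono.lt_iff_lt.1 hij
  refine ⟨n, _, ⟨m, hnm, hn, hm, fun k h1 h2 hk => ?_, rfl⟩, factorAt_blockStart_sub hnm.le⟩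
  exact hbetween _ (blockStart_strictMono h1) (blockStart_strictMono h2)
    ((occursAt_bN_succ ..).2 ⟨k, rfl, hk⟩)

/-- The empty word occurs everywhere, so its return words are the letters. -/
theorem isReturnWordAt_bN_zero (v : List Bool) (i : ℕ) :
    IsReturnWordAt fibWord (bN 0) v i ↔ v = [fibWord i] := by
  constructor
  · rintro ⟨j, hij, -, -, hbetween, rfl⟩
    have hj : j = i + 1 := by
      by_contra hne
      exact hbetween (i + 1) (by omega) (by omega) (occursAt_nil ..)
    subst hj
    rw [Nat.add_sub_cancel_left, factorAt_one]
  · rintro rfl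
    refine ⟨i + 1, by omega, occursAt_nil .., occursAt_nil .., fun m h1 h2 => by omega, ?_⟩
    rw [Nat.add_sub_cancel_left, factorAt_one]

/-- for N ≥ 1, φ^N(a) is the prefix return word to b_N in the Fibonacci
word, φ^N(b) is also a return word to b_N, and these are the only return words. -/
theorem return_words_to_bN (N : ℕ) (hN : 1 ≤ N) :
    IsReturnWordAt fibWord (bN N) (phiW^[N] [false]) 0 ∧
    IsReturnWord fibWord (bN N) (phiW^[N] [true]) ∧
    ∀ v : List Bool, IsReturnWord fibWord (bN N) v →
      v = phiW^[N] [false] ∨ v = phiW^[N] [true] := by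
  -- the induction starts at `N = 0`, where the statement also holds
  clear hN
  induction N with
  | zero =>
    refine ⟨(isReturnWordAt_bN_zero ..).2 rfl, ⟨1, (isReturnWordAt_bN_zero ..).2 rfl⟩, ?_⟩
    rintro v ⟨i, h⟩
    rw [(isReturnWordAt_bN_zero ..).1 h]
    cases fibWord i <;> simp
  | succ N ih =>
    obtain ⟨h1, ⟨i, h2⟩, h3⟩ := ih
    simp only [Function.iterate_succ_apply']
    refine ⟨h1.map_phiW, ⟨_, h2.map_phiW⟩, ?_⟩
    rintro v ⟨i, h⟩
    obtain ⟨n, w, hw, rfl⟩ := h.exists_eq_phiW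
    exact (h3 w ⟨n, hw⟩).imp (congrArg _) (congrArg _)
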